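/- arXiv:2502.13384 — 2 statements merged into one kernel-verified Lean document; each statement's English description precedes it below -/
import Mathlib

section
/- Let g : ℝ → ℝ be defined by g(b) = 4π² + 2b + b² − 2b·e^b. Then g has exactly one real root; that is, there exists a unique b₀ ∈ ℝ with 4π² + 2b₀ + b₀² − 2b₀·e^{b₀} = 0. -/
open Real

/-!
Write `h b = 2be^b - 2b - b²`, so that the roots of `c + 2b + b² - 2be^b` are the points where `h`
takes the value `c`. As `h'(b) = 2(1 + b)(e^b - 1)`, the function `h` is strictly increasing on
`[0, ∞)`, and `h b ≥ b²` there, so `h` takes every value `c ≥ 0` exactly once on `[0, ∞)`. On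
`(-∞, 0]` its maximum is the critical value `h (-1) = 1 - 2/e < 1 < 4π²`: bounding `e^b` below by
its tangent line at `-1` gives `h b ≤ (1 - 2/e)(1 - (b + 1)²)` for `b ≤ 0`.
-/

open Set

/-- The function `2be^b - 2b - b²`: the part of `c + 2b + b² - 2be^b` that depends on `b`, with its
sign reversed so that roots become points at level `c`. -/
noncomputable def levelFun (b : ℝ) : ℝ := 2 * b * exp b - 2 * b - b ^ 2

theorem levelFun_zero : levelFun 0 = 0 := by simp [levelFun]

theorem levelFun_eq_iff {b c : ℝ} :
    levelFun b = c ↔ c + 2 * b + b ^ 2 - 2 * b * exp b = 0 := by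
  unfold levelFun
  constructor <;> intro h <;> linarith

theorem continuous_levelFun : Continuous levelFun := by
  unfold levelFun
  fun_prop

theorem hasDerivAt_levelFun (b : ℝ) : HasDerivAt levelFun (2 * (1 + b) * (exp b - 1)) b := by
  have hlin : HasDerivAt (fun x : ℝ ↦ 2 * x) 2 b := by
    simpa using (hasDerivAt_id b).const_mul 2
  refine (((hlin.mul (hasDerivAt_exp b)).sub hlin).sub (hasDerivAt_pow 2 b)).congr_deriv ?_
  norm_num
  ring

theorem strictMonoOn_levelFun : StrictMonoOn levelFun (Ici 0) := by
  refine strictMonoOn_of_deriv_pos (convex_Ici 0) continuous_levelFun.continuousOn fun b hb ↦ ?_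
  rw [interior_Ici, mem_Ioi] at hb
  rw [(hasDerivAt_levelFun b).deriv]
  have hexp : 0 < exp b - 1 := sub_pos.mpr (one_lt_exp_iff.mpr hb)
  positivity

theorem sq_le_levelFun {b : ℝ} (hb : 0 ≤ b) : b ^ 2 ≤ levelFun b :=
  calc b ^ 2 = 2 * b * (b + 1) - 2 * b - b ^ 2 := by ring
    _ ≤ levelFun b := by
      unfold levelFun
      gcongr
      exact add_one_le_exp b

theorem two_mul_exp_neg_one_lt_one : 2 * exp (-1) < 1 := by
  rw [exp_neg, ← div_eq_mul_inv, div_lt_one (exp_pos 1)]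
  exact exp_one_gt_two

theorem levelFun_le_of_nonpos {b : ℝ} (hb : b ≤ 0) : levelFun b ≤ 1 - 2 * exp (-1) := by
  have htangent : exp (-1) * (b + 2) ≤ exp b :=
    calc exp (-1) * (b + 2) = exp (-1) * ((b + 1) + 1) := by ring
      _ ≤ exp (-1) * exp (b + 1) := by gcongr; exact add_one_le_exp (b + 1)
      _ = exp b := by rw [← exp_add]; congr 1; ring
  calc levelFun b ≤ 2 * b * (exp (-1) * (b + 2)) - 2 * b - b ^ 2 := by
        unfold levelFun
        gcongr ?_ - 2 * b - b ^ 2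
        exact mul_le_mul_of_nonpos_left htangent (by linarith)
    _ = (1 - 2 * exp (-1)) - (1 - 2 * exp (-1)) * (b + 1) ^ 2 := by ring
    _ ≤ 1 - 2 * exp (-1) :=
        sub_le_self _ (mul_nonneg (sub_nonneg.mpr two_mul_exp_neg_one_lt_one.le) (sq_nonneg _))

theorem exists_levelFun_eq {c : ℝ} (hc : 0 ≤ c) : ∃ b, 0 ≤ b ∧ levelFun b = c := by
  have hlevel : c ∈ Icc (levelFun 0) (levelFun √c) :=
    ⟨levelFun_zero.trans_le hc, (sq_sqrt hc).symm.trans_le (sq_le_levelFun (sqrt_nonneg c))⟩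
  obtain ⟨b, hb, hbc⟩ :=
    intermediate_value_Icc (sqrt_nonneg c) continuous_levelFun.continuousOn hlevel
  exact ⟨b, hb.1, hbc⟩

theorem unique_real_root_of_g_general {c : ℝ} (hc : 1 - 2 * exp (-1) < c) :
    ∃! b : ℝ, c + 2 * b + b ^ 2 - 2 * b * exp b = 0 := by
  simp only [← levelFun_eq_iff]
  have hc₀ : 0 ≤ c := (sub_pos.mpr two_mul_exp_neg_one_lt_one).le.trans hc.le
  have nonneg_of_eq {b : ℝ} (h : levelFun b = c) : 0 ≤ b := by
    by_contra! hb
    exact (levelFun_le_of_nonpos hb.le).not_gt (h ▸ hc)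
  obtain ⟨b₀, hb₀, hroot⟩ := exists_levelFun_eq hc₀
  exact ⟨b₀, hroot, fun b hb ↦
    strictMonoOn_levelFun.injOn (nonneg_of_eq hb) hb₀ (hb.trans hroot.symm)⟩

/-- The function `g(b) = 4π² + 2b + b² − 2b·e^b` has exactly one real root. -/
theorem unique_real_root_of_g :
    ∃! b₀ : ℝ, 4 * π ^ 2 + 2 * b₀ + b₀ ^ 2 - 2 * b₀ * Real.exp b₀ = 0 :=
  unique_real_root_of_g_general (by nlinarith [pi_gt_three, exp_pos (-1)])
end

section
/- Let b₀ be the unique real root of g(b) = 4π² + 2b + b² − 2b·e^b. Then 2.3565 < b₀ < 2.3566. -/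
open Real

/-!
For `b ≤ 0`, `g b = 4π² - 1 + (b + 1)² - 2b·e^b` is positive. For `b ≥ 0`,
`g b = 4π² - (b² + 2b(e^b - b - 1))` is strictly decreasing, because `e^b - b - 1` is nonnegative
and increasing there. So the root is located by the signs of `g` at `2.3565` and `2.3566`, where the
exponential is estimated as `e^(2 + x) = e² · e^x`, with `e^x` close to its Taylor polynomial of
degree 5.
-/

open Set

/-- The function `g` of the paper, with its constant term `4π²` replaced by a parameter `a` because
the monotonicity argument works for every constant. -/
noncomputable def quadSubMulExp (a b : ℝ) : ℝ :=
  a + 2 * b + b ^ 2 - 2 * b * exp b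

lemma quadSubMulExp_pos_of_nonpos {a b : ℝ} (ha : 1 < a) (hb : b ≤ 0) :
    0 < quadSubMulExp a b := by
  have hexp_term : 0 ≤ -b * exp b := mul_nonneg (neg_nonneg.2 hb) (exp_pos b).le
  calc 0 < (a - 1) + (b + 1) ^ 2 + 2 * (-b * exp b) := by linarith [sq_nonneg (b + 1)]
    _ = quadSubMulExp a b := by unfold quadSubMulExp; ring

lemma strictMonoOn_exp_sub_id : StrictMonoOn (fun x : ℝ ↦ exp x - x) (Ici 0) := by
  intro x (hx : 0 ≤ x) y _ hxy
  have htangent : y - x < exp (y - x) - 1 :=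
    lt_sub_iff_add_lt.2 (add_one_lt_exp (sub_pos.2 hxy).ne')
  have hincrement : y - x < exp y - exp x :=
    calc y - x ≤ exp x * (y - x) := le_mul_of_one_le_left (sub_pos.2 hxy).le (one_le_exp hx)
      _ < exp x * (exp (y - x) - 1) := mul_lt_mul_of_pos_left htangent (exp_pos x)
      _ = exp y - exp x := by rw [mul_sub_one, ← exp_add, add_sub_cancel]
  change exp x - x < exp y - y
  linarith

lemma strictAntiOn_quadSubMulExp (a : ℝ) : StrictAntiOn (quadSubMulExp a) (Ici 0) := by
  have hregroup (b : ℝ) : quadSubMulExp a b = a - (b ^ 2 + 2 * b * (exp b - b - 1)) := by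
    unfold quadSubMulExp; ring
  intro x (hx : 0 ≤ x) y (hy : 0 ≤ y) hxy
  have hremainder : exp x - x - 1 ≤ exp y - y - 1 :=
    sub_le_sub_right (strictMonoOn_exp_sub_id hx hy hxy).le 1
  have hremainder_nonneg : 0 ≤ exp x - x - 1 := by linarith [add_one_le_exp x]
  have hproduct : 2 * x * (exp x - x - 1) ≤ 2 * y * (exp y - y - 1) :=
    mul_le_mul (by linarith) hremainder hremainder_nonneg (by positivity)
  have hsq : x ^ 2 < y ^ 2 := by gcongr
  rw [hregroup, hregroup]
  linarith

lemma exp_two_add (x : ℝ) : exp (2 + x) = exp 1 ^ 2 * exp x := by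
  rw [exp_add, ← exp_nat_mul]; norm_num

lemma exp_2_3565_lt : exp 2.3565 < 10.5546 := by
  have htaylor : exp (0.3565 : ℝ) < 1.42834 := by
    refine (exp_bound' (n := 6) (by norm_num) (by norm_num) (by norm_num)).trans_lt ?_
    norm_num [Finset.sum_range_succ, Nat.factorial]
  calc exp 2.3565 = exp (2 + 0.3565) := by norm_num
    _ = exp 1 ^ 2 * exp 0.3565 := exp_two_add _
    _ < 2.7182818286 ^ 2 * 1.42834 := by gcongr; exact exp_one_lt_d9
    _ < 10.5546 := by norm_num

lemma lt_exp_2_3566 : 10.5548 < exp 2.3566 := by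
  have htaylor : 1.42846 < exp (0.3566 : ℝ) := by
    refine lt_of_lt_of_le ?_ (sum_le_exp_of_nonneg (by norm_num) 6)
    norm_num [Finset.sum_range_succ, Nat.factorial]
  calc 10.5548 < 2.7182818283 ^ 2 * 1.42846 := by norm_num
    _ < exp 1 ^ 2 * exp 0.3566 := by gcongr; exact exp_one_gt_d9
    _ = exp (2 + 0.3566) := (exp_two_add _).symm
    _ = exp 2.3566 := by norm_num

lemma quadSubMulExp_2_3565_pos : 0 < quadSubMulExp (4 * π ^ 2) 2.3565 := by
  have hpi : 3.141592 ^ 2 < π ^ 2 := by gcongr; exact pi_gt_d6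
  unfold quadSubMulExp
  linarith [exp_2_3565_lt]

lemma quadSubMulExp_2_3566_neg : quadSubMulExp (4 * π ^ 2) 2.3566 < 0 := by
  have hpi : π ^ 2 < 3.141593 ^ 2 := by gcongr; exact pi_lt_d6
  unfold quadSubMulExp
  linarith [lt_exp_2_3566]

/-- If `b₀` is the (unique) real root of `g(b) = 4π² + 2b + b² − 2b·e^b`,
then `2.3565 < b₀ < 2.3566`. -/
theorem real_root_of_g_bounds (b₀ : ℝ)
    (hroot : 4 * π ^ 2 + 2 * b₀ + b₀ ^ 2 - 2 * b₀ * Real.exp b₀ = 0) :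
    2.3565 < b₀ ∧ b₀ < 2.3566 := by
  have hzero : quadSubMulExp (4 * π ^ 2) b₀ = 0 := hroot
  have hb₀ : 0 ≤ b₀ := by
    by_contra! hneg
    have hconst : 1 < 4 * π ^ 2 := by nlinarith [pi_gt_three]
    exact (quadSubMulExp_pos_of_nonpos hconst hneg.le).ne' hzero
  have hanti := strictAntiOn_quadSubMulExp (4 * π ^ 2)
  constructor
  · refine (hanti.lt_iff_gt hb₀ (by norm_num)).1 ?_
    exact hzero.trans_lt quadSubMulExp_2_3565_pos
  · refine (hanti.lt_iff_gt (by norm_num) hb₀).1 ?_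
    exact quadSubMulExp_2_3566_neg.trans_eq hzero.symm
end
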